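/- In the notation of the context, let ε be a grading of Δ_i and let w, τ ∈ W_i. Define the cross-acted grading τ×ε of Δ_i by (τ×ε)(α) = ε(τ⁻¹α). Then m_{τ×ε}(w) = m_ε(wτ) + m_ε(τ) in M_θ. -/

import Mathlib

open scoped RealInnerProductSpace

set_option synthInstance.maxHeartbeats 1000000

noncomputable section

abbrev EucB (n : ℕ) := EuclideanSpace ℝ (Fin n)

def eB (n : ℕ) (i : Fin n) : EucB n := EuclideanSpace.single i (1 : ℝ)

def DeltaB (n : ℕ) : Set (EucB n) :=
  {v | (∃ i j : Fin n, i < j ∧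
          (v = eB n i + eB n j ∨ v = eB n i - eB n j ∨
           v = -eB n i + eB n j ∨ v = -eB n i - eB n j)) ∨
        ∃ i : Fin n, v = eB n i ∨ v = -eB n i}

def DeltaBpos (n : ℕ) : Set (EucB n) :=
  {v | (∃ i j : Fin n, i < j ∧ (v = eB n i + eB n j ∨ v = eB n i - eB n j)) ∨
        ∃ i : Fin n, v = eB n i}

def corootB (n : ℕ) (α : EucB n) : EucB n := (2 / ⟪α, α⟫) • α

def corootForm (n : ℕ) (α : EucB n) : Module.Dual ℝ (EucB n) where
  toFun x := ⟪x, corootB n α⟫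
  map_add' x y := inner_add_left _ _ _
  map_smul' c x := by simpa using real_inner_smul_left x (corootB n α) c

def sReflB (n : ℕ) (α : EucB n) : EucB n ≃ₗ[ℝ] EucB n :=
  if h : corootForm n α α = 2 then Module.reflection h else LinearEquiv.refl ℝ (EucB n)

def WeylB (n : ℕ) : Subgroup (EucB n ≃ₗ[ℝ] EucB n) :=
  Subgroup.closure {g | ∃ α ∈ DeltaB n, g = sReflB n α}

/-- The coroot lattice `Q∨`, the `ℤ`-span of the coroots. -/
def QvB (n : ℕ) : Submodule ℤ (EucB n) :=
  Submodule.span ℤ {v | ∃ α ∈ DeltaB n, v = corootB n α}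

/-- The submodule `2Q∨` of `Q∨`. -/
def twoQB (n : ℕ) : Submodule ℤ ↥(QvB n) :=
  LinearMap.range ((2 : ℤ) • (LinearMap.id : ↥(QvB n) →ₗ[ℤ] ↥(QvB n)))

/-- The quotient `Q∨/2Q∨`. -/
abbrev QModB (n : ℕ) := ↥(QvB n) ⧸ twoQB n

/-- The quotient map `π : Q∨ → Q∨/2Q∨`. -/
def piQ (n : ℕ) : ↥(QvB n) →ₗ[ℤ] QModB n := (twoQB n).mkQ

/-- The `θ`-fixed vectors of `Q∨`. -/
def fixedQ (n : ℕ) (θ : EucB n ≃ₗ[ℝ] EucB n) : Submodule ℤ ↥(QvB n) where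
  carrier := {v | θ (v : EucB n) = (v : EucB n)}
  add_mem' := by
    intro a b ha hb
    simp only [Set.mem_setOf_eq, Submodule.coe_add, map_add] at *
    rw [ha, hb]
  zero_mem' := by simp
  smul_mem' := by
    intro c a ha
    simp only [Set.mem_setOf_eq, Submodule.coe_smul, map_zsmul] at *
    rw [ha]

/-- The `θ`-antifixed vectors of `Q∨` (those with `θv = −v`). -/
def negQ (n : ℕ) (θ : EucB n ≃ₗ[ℝ] EucB n) : Submodule ℤ ↥(QvB n) where
  carrier := {v | θ (v : EucB n) = -(v : EucB n)}
  add_mem' := by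
    intro a b ha hb
    simp only [Set.mem_setOf_eq, Submodule.coe_add, map_add] at *
    rw [ha, hb]; abel
  zero_mem' := by simp
  smul_mem' := by
    intro c a ha
    simp only [Set.mem_setOf_eq, Submodule.coe_smul, map_zsmul] at *
    rw [ha, smul_neg]

/-- `A₋ = π({v ∈ Q∨ : θv = v})`. -/
def AmB (n : ℕ) (θ : EucB n ≃ₗ[ℝ] EucB n) : Submodule ℤ (QModB n) :=
  (fixedQ n θ).map (piQ n)

/-- `A₊ = π({v ∈ Q∨ : θv = −v})`. -/
def ApB (n : ℕ) (θ : EucB n ≃ₗ[ℝ] EucB n) : Submodule ℤ (QModB n) :=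
  (negQ n θ).map (piQ n)

/-- `M_θ = A₋/(A₋ ∩ A₊)`. -/
abbrev MthB (n : ℕ) (θ : EucB n ≃ₗ[ℝ] EucB n) :=
  ↥(AmB n θ) ⧸ (ApB n θ).comap (AmB n θ).subtype

open Classical in
/-- `m_β ∈ M_θ`, the class of `π(β∨)` (defined when `β∨ ∈ Q∨` is fixed by `θ`,
e.g. for `β` an imaginary root). -/
def mB (n : ℕ) (θ : EucB n ≃ₗ[ℝ] EucB n) (β : EucB n) : MthB n θ :=
  if h : corootB n β ∈ QvB n ∧ θ (corootB n β) = corootB n β then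
    Submodule.Quotient.mk
      ⟨piQ n ⟨corootB n β, h.1⟩,
        Submodule.mem_map_of_mem (p := fixedQ n θ) (by exact h.2)⟩
  else 0

/-- The imaginary roots of `θ` that are positive. -/
def ImPosB (n : ℕ) (θ : EucB n ≃ₗ[ℝ] EucB n) : Set (EucB n) :=
  {α | α ∈ DeltaBpos n ∧ θ α = α}

/-- The simple roots `Π_i` of the positive imaginary system: positive imaginary roots
that are not sums of two positive imaginary roots. -/
def SimpleImB (n : ℕ) (θ : EucB n ≃ₗ[ℝ] EucB n) : Set (EucB n) :=
  {β | β ∈ ImPosB n θ ∧ ¬∃ γ δ : EucB n, γ ∈ ImPosB n θ ∧ δ ∈ ImPosB n θ ∧ β = γ + δ}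

/-- The product `s_{β_N}⋯s_{β₁}` of the reflections of a word `(β₁, …, β_N)`. -/
def wordProdB (n : ℕ) (L : List (EucB n)) : EucB n ≃ₗ[ℝ] EucB n :=
  ((L.map (sReflB n)).reverse).prod

/-- `S(β₁,…,β_N) = ∑_j ε(s_{β₁}⋯s_{β_{j−1}}(β_j)) · m_{β_j}`, computed with an
accumulator recording the prefix product `s_{β₁}⋯s_{β_{j−1}}`. -/
def SwordB (n : ℕ) (θ : EucB n ≃ₗ[ℝ] EucB n) (ε : EucB n → ZMod 2) :
    (EucB n ≃ₗ[ℝ] EucB n) → List (EucB n) → MthB n θ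
  | _, [] => 0
  | acc, β :: rest =>
      (ε (acc β)).val • mB n θ β + SwordB n θ ε (acc * sReflB n β) rest

/-! ### Helper lemmas -/

theorem inner_eB (n : ℕ) (v : EucB n) (i : Fin n) : ⟪v, eB n i⟫ = v i := by
  simp [eB, EuclideanSpace.inner_single_right]

theorem inner_eB_left (n : ℕ) (v : EucB n) (i : Fin n) : ⟪eB n i, v⟫ = v i := by
  rw [real_inner_comm, inner_eB]

theorem eB_self (n : ℕ) (i : Fin n) : eB n i i = 1 := by simp [eB]

theorem eB_ne (n : ℕ) {i j : Fin n} (h : j ≠ i) : eB n i j = 0 := by simp [eB, h]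

/-- Integer coordinates. -/
def IsIntB (n : ℕ) (v : EucB n) : Prop := ∀ i, ∃ z : ℤ, v i = z

/-- Isometry. -/
def IsIsoB (n : ℕ) (g : EucB n ≃ₗ[ℝ] EucB n) : Prop := ∀ x y, ⟪g x, g y⟫ = ⟪x, y⟫

theorem IsIntB.add {n : ℕ} {v w : EucB n} (hv : IsIntB n v) (hw : IsIntB n w) :
    IsIntB n (v + w) := by
  intro i
  obtain ⟨a, ha⟩ := hv i
  obtain ⟨b, hb⟩ := hw i
  exact ⟨a + b, by simp [ha, hb]⟩

theorem IsIntB.zsmul {n : ℕ} {v : EucB n} (hv : IsIntB n v) (c : ℤ) :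
    IsIntB n ((c : ℝ) • v) := by
  intro i
  obtain ⟨a, ha⟩ := hv i
  exact ⟨c * a, by simp [ha]⟩

theorem IsIntB.neg {n : ℕ} {v : EucB n} (hv : IsIntB n v) : IsIntB n (-v) := by
  simpa using hv.zsmul (-1)

theorem IsIntB.sub {n : ℕ} {v w : EucB n} (hv : IsIntB n v) (hw : IsIntB n w) :
    IsIntB n (v - w) := by
  rw [sub_eq_add_neg]; exact hv.add hw.neg

theorem isIntB_eB (n : ℕ) (i : Fin n) : IsIntB n (eB n i) := by
  intro j
  by_cases h : j = i
  · subst h; exact ⟨1, by simp [eB_self]⟩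
  · exact ⟨0, by simp [eB_ne n h]⟩

theorem IsIntB.inner {n : ℕ} {v w : EucB n} (hv : IsIntB n v) (hw : IsIntB n w) :
    ∃ z : ℤ, ⟪v, w⟫ = z := by
  choose a ha using hv
  choose b hb using hw
  refine ⟨∑ i, a i * b i, ?_⟩
  rw [PiLp.inner_apply]
  push_cast
  refine Finset.sum_congr rfl fun i _ => ?_
  simp [ha, hb, mul_comm]

theorem norm_one_int {n : ℕ} {v : EucB n} (hv : IsIntB n v) (h1 : ⟪v, v⟫ = (1 : ℝ)) :
    ∃ i, v = eB n i ∨ v = -eB n i := by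
  have hne : ∃ i, v i ≠ 0 := by
    by_contra! h
    have : v = 0 := by ext i; simp [h i]
    rw [this] at h1; simp at h1
  obtain ⟨i, hi⟩ := hne
  obtain ⟨z, hz⟩ := hv i
  have hz0 : z ≠ 0 := by rintro rfl; apply hi; simpa using hz
  have hee : ⟪eB n i, eB n i⟫ = (1 : ℝ) := by rw [inner_eB, eB_self]
  have hp : 0 ≤ ⟪v - eB n i, v - eB n i⟫ := real_inner_self_nonneg
  have hm : 0 ≤ ⟪v + eB n i, v + eB n i⟫ := real_inner_self_nonneg
  have ep : ⟪v - eB n i, v - eB n i⟫ = 2 - 2 * (z : ℝ) := by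
    rw [real_inner_sub_sub_self, h1, hee, inner_eB, hz]; ring
  have em : ⟪v + eB n i, v + eB n i⟫ = 2 + 2 * (z : ℝ) := by
    rw [real_inner_add_add_self, h1, hee, inner_eB, hz]; ring
  rw [ep] at hp
  rw [em] at hm
  have a1 : z ≤ 1 := by
    have : (z : ℝ) ≤ 1 := by linarith
    exact_mod_cast this
  have a2 : -1 ≤ z := by
    have : (-1 : ℝ) ≤ z := by linarith
    exact_mod_cast this
  refine ⟨i, ?_⟩
  have : z = 1 ∨ z = -1 := by omega
  rcases this with rfl | rfl
  · left
    rw [← sub_eq_zero, ← inner_self_eq_zero (𝕜 := ℝ), ep]; norm_num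
  · right
    rw [← sub_eq_zero, sub_neg_eq_add, ← inner_self_eq_zero (𝕜 := ℝ), em]; norm_num

theorem mem_DeltaB_iff (n : ℕ) (v : EucB n) :
    v ∈ DeltaB n ↔ IsIntB n v ∧ (⟪v, v⟫ = (1 : ℝ) ∨ ⟪v, v⟫ = (2 : ℝ)) := by
  have hee : ∀ i, ⟪eB n i, eB n i⟫ = (1 : ℝ) := fun i => by rw [inner_eB, eB_self]
  constructor
  · rintro (⟨i, j, hij, h⟩ | ⟨i, h⟩)
    · have h0 : ⟪eB n i, eB n j⟫ = (0 : ℝ) := by rw [inner_eB, eB_ne n hij.ne']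
      have h0' : ⟪eB n j, eB n i⟫ = (0 : ℝ) := by rw [inner_eB, eB_ne n hij.ne]
      have Ii := isIntB_eB n i
      have Ij := isIntB_eB n j
      rcases h with rfl | rfl | rfl | rfl
      · refine ⟨Ii.add Ij, Or.inr ?_⟩
        simp only [inner_add_left, inner_add_right, inner_neg_left, inner_neg_right, hee, h0, h0']
        norm_num
      · refine ⟨Ii.sub Ij, Or.inr ?_⟩
        simp only [inner_sub_left, inner_sub_right, inner_neg_left, inner_neg_right, hee, h0, h0']
        norm_num
      · refine ⟨Ii.neg.add Ij, Or.inr ?_⟩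
        simp only [inner_add_left, inner_add_right, inner_neg_left, inner_neg_right, hee, h0, h0']
        norm_num
      · refine ⟨Ii.neg.sub Ij, Or.inr ?_⟩
        simp only [inner_sub_left, inner_sub_right, inner_neg_left, inner_neg_right, hee, h0, h0']
        norm_num
    · rcases h with rfl | rfl
      · exact ⟨isIntB_eB n i, Or.inl (hee i)⟩
      · exact ⟨(isIntB_eB n i).neg, Or.inl (by rw [inner_neg_neg, hee])⟩
  · rintro ⟨hv, h | h⟩
    · exact Or.inr (norm_one_int hv h)
    · left
      have hne : ∃ i, v i ≠ 0 := by
        by_contra! h'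
        have : v = 0 := by ext i; simp [h' i]
        rw [this] at h; simp at h
      obtain ⟨i, hi⟩ := hne
      obtain ⟨z, hz⟩ := hv i
      have hz0 : z ≠ 0 := by rintro rfl; apply hi; simpa using hz
      have hcs : v i * v i ≤ 2 := by
        have := real_inner_mul_inner_self_le v (eB n i)
        rw [inner_eB, h, hee] at this; linarith
      rw [hz] at hcs
      have hcs' : z * z ≤ 2 := by
        have h3 : ((z * z : ℤ) : ℝ) ≤ ((2 : ℤ) : ℝ) := by push_cast; exact hcs
        exact Int.cast_le.1 h3
      have hz1 : z = 1 ∨ z = -1 := by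
        have : z ≤ 1 := by nlinarith
        have : -1 ≤ z := by nlinarith
        omega
      obtain ⟨s, hs, hvi, hsz⟩ : ∃ s : ℝ, (s = 1 ∨ s = -1) ∧ v i = s ∧ ∃ z : ℤ, s = z := by
        refine ⟨z, ?_, hz, z, rfl⟩
        rcases hz1 with rfl | rfl <;> simp
      have hss : s * s = 1 := by rcases hs with rfl | rfl <;> norm_num
      have hu : ⟪v - s • eB n i, v - s • eB n i⟫ = (1 : ℝ) := by
        rw [real_inner_sub_sub_self, h]
        simp only [inner_smul_left, inner_smul_right, inner_eB, eB_self, hvi]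
        simp
        nlinarith
      obtain ⟨zs, hzs⟩ := hsz
      have hI : IsIntB n (v - s • eB n i) := by
        rw [hzs]; exact hv.sub ((isIntB_eB n i).zsmul zs)
      obtain ⟨j, hj⟩ := norm_one_int hI hu
      have hji : j ≠ i := by
        rintro rfl
        have : (v - s • eB n j) j = 0 := by simp [hvi, eB_self]
        rcases hj with hj | hj <;> rw [hj] at this <;> simp [eB_self] at this
      have hcases : v = s • eB n i + eB n j ∨ v = s • eB n i - eB n j := by
        rcases hj with hj | hj
        · left; rw [← hj]; abel
        · right; rw [sub_eq_add_neg, ← hj]; abel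
      rcases lt_or_gt_of_ne hji with hlt | hlt
      · refine ⟨j, i, hlt, ?_⟩
        rcases hs with rfl | rfl <;> rcases hcases with h | h <;> rw [h] <;> simp
        · left; abel
        · right; right; left; abel
        · right; left; abel
        · right; right; right; abel
      · refine ⟨i, j, hlt, ?_⟩
        rcases hs with rfl | rfl <;> rcases hcases with h | h <;> rw [h] <;> simp

theorem DeltaB_inner_ne {n : ℕ} {α : EucB n} (h : α ∈ DeltaB n) : ⟪α, α⟫ ≠ (0 : ℝ) := by
  rcases ((mem_DeltaB_iff n α).1 h).2 with h | h <;> rw [h] <;> norm_num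

theorem sReflB_apply {n : ℕ} {α : EucB n} (h : α ∈ DeltaB n) (x : EucB n) :
    sReflB n α x = x - ⟪x, corootB n α⟫ • α := by
  have h2 : corootForm n α α = 2 := by
    change ⟪α, corootB n α⟫ = 2
    rw [corootB, inner_smul_right]
    exact div_mul_cancel₀ _ (DeltaB_inner_ne h)
  rw [sReflB, dif_pos h2, Module.reflection_apply]
  rfl

theorem sReflB_iso {n : ℕ} {α : EucB n} (h : α ∈ DeltaB n) : IsIsoB n (sReflB n α) := by
  intro x y
  have h0 := DeltaB_inner_ne h
  rw [sReflB_apply h, sReflB_apply h]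
  simp only [corootB, inner_sub_left, inner_sub_right, real_inner_smul_left,
    real_inner_smul_right]
  rw [real_inner_comm α y]
  field_simp
  ring

theorem sReflB_int {n : ℕ} {α : EucB n} (h : α ∈ DeltaB n) {v : EucB n} (hv : IsIntB n v) :
    IsIntB n (sReflB n α v) := by
  rw [sReflB_apply h]
  obtain ⟨hI, hc⟩ := (mem_DeltaB_iff n α).1 h
  obtain ⟨z, hz⟩ := hv.inner hI
  have : ∃ c : ℤ, ⟪v, corootB n α⟫ = c := by
    rw [corootB, inner_smul_right, hz]
    rcases hc with hc | hc <;> rw [hc]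
    · exact ⟨2 * z, by push_cast; ring⟩
    · exact ⟨z, by ring⟩
  obtain ⟨c, hc⟩ := this
  rw [hc]
  exact hv.sub (hI.zsmul c)

theorem sReflB_sq {n : ℕ} {α : EucB n} (h : α ∈ DeltaB n) : sReflB n α * sReflB n α = 1 := by
  ext1 x
  have h0 := DeltaB_inner_ne h
  change sReflB n α (sReflB n α x) = x
  rw [sReflB_apply h, sReflB_apply h]
  simp only [corootB, inner_sub_left, real_inner_smul_left, real_inner_smul_right]
  rw [sub_sub, ← add_smul]
  have : (2 / ⟪α, α⟫ * ⟪x, α⟫ +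
      (2 / ⟪α, α⟫ * ⟪x, α⟫ - 2 / ⟪α, α⟫ * (2 / ⟪α, α⟫ * ⟪x, α⟫ * ⟪α, α⟫))) = (0 : ℝ) := by
    field_simp; ring
  rw [this]; simp

/-- Isometries preserving integrality. -/
def GoodB (n : ℕ) (g : EucB n ≃ₗ[ℝ] EucB n) : Prop :=
  IsIsoB n g ∧ ∀ v, IsIntB n v → IsIntB n (g v)

theorem GoodB.mul {n : ℕ} {g h : EucB n ≃ₗ[ℝ] EucB n} (hg : GoodB n g) (hh : GoodB n h) :
    GoodB n (g * h) :=
  ⟨fun x y => (hg.1 _ _).trans (hh.1 _ _), fun v hv => hg.2 _ (hh.2 _ hv)⟩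

theorem GoodB.one (n : ℕ) : GoodB n 1 := ⟨fun _ _ => rfl, fun _ h => h⟩

theorem GoodB.refl {n : ℕ} {α : EucB n} (h : α ∈ DeltaB n) : GoodB n (sReflB n α) :=
  ⟨sReflB_iso h, fun _ hv => sReflB_int h hv⟩

theorem sReflB_inv {n : ℕ} {α : EucB n} (h : α ∈ DeltaB n) : (sReflB n α)⁻¹ = sReflB n α :=
  inv_eq_of_mul_eq_one_left (sReflB_sq h)

theorem GoodB.mem {n : ℕ} {g : EucB n ≃ₗ[ℝ] EucB n} (hg : GoodB n g) {α : EucB n}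
    (h : α ∈ DeltaB n) : g α ∈ DeltaB n := by
  rw [mem_DeltaB_iff] at *
  rw [hg.1]
  exact ⟨hg.2 _ h.1, h.2⟩

theorem WeylB_good {n : ℕ} {g : EucB n ≃ₗ[ℝ] EucB n} (hg : g ∈ WeylB n) : GoodB n g := by
  have : GoodB n g ∧ GoodB n g⁻¹ := by
    induction hg using Subgroup.closure_induction with
    | mem x hx =>
      obtain ⟨α, hα, rfl⟩ := hx
      rw [sReflB_inv hα]; exact ⟨.refl hα, .refl hα⟩
    | one => rw [inv_one]; exact ⟨.one n, .one n⟩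
    | mul x y _ _ hx hy => rw [mul_inv_rev]; exact ⟨hx.1.mul hy.1, hy.2.mul hx.2⟩
    | inv x _ hx => rw [inv_inv]; exact ⟨hx.2, hx.1⟩
  exact this.1

/-- If `e_i + σ e_j` is fixed then either `e_i` is fixed or `θ e_i = σ e_j`. -/
theorem fixed_cases {n : ℕ} {θ : EucB n ≃ₗ[ℝ] EucB n} (hθ : GoodB n θ) {i j : Fin n}
    (hij : i < j) {σ : ℝ} (hσ : σ = 1 ∨ σ = -1)
    (h : θ (eB n i + σ • eB n j) = eB n i + σ • eB n j) :
    θ (eB n i) = eB n i ∨ θ (eB n i) = σ • eB n j := by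
  have hee : ∀ i, ⟪eB n i, eB n i⟫ = (1 : ℝ) := fun i => by rw [inner_eB, eB_self]
  have hss : σ * σ = 1 := by rcases hσ with rfl | rfl <;> norm_num
  have h1 : ⟪θ (eB n i), θ (eB n i)⟫ = (1 : ℝ) := by rw [hθ.1, hee]
  -- inner product with the fixed vector
  have key : (θ (eB n i)) i + σ * (θ (eB n i)) j = 1 := by
    have := hθ.1 (eB n i) (eB n i + σ • eB n j)
    rw [h] at this
    simp only [inner_add_right, real_inner_smul_right, inner_eB, eB_self, eB_ne n hij.ne'] at this
    linarith
  obtain ⟨a, ha⟩ := norm_one_int (hθ.2 _ (isIntB_eB n i)) h1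
  by_cases hai : i = a
  · subst hai
    left
    rcases ha with ha | ha
    · exact ha
    · rw [ha] at key
      simp [eB_self, eB_ne n hij.ne'] at key
      norm_num at key
  · by_cases haj : j = a
    · subst haj
      right
      rcases ha with ha | ha <;> rw [ha] at key ⊢ <;>
        simp [eB_self, eB_ne n hij.ne] at key
      · rw [key]; simp
      · have : σ = -1 := by linarith
        rw [this]; simp
    · exfalso
      rcases ha with ha | ha <;> rw [ha] at key <;> simp [eB_ne n hai, eB_ne n haj] at key

theorem zmod2_val_cast (a : ZMod 2) : (((a.val : ℕ) : ℤ) : ZMod 2) = a := by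
  simp

/-- A grading is given by pairing with a vector, modulo two. -/
theorem exists_grading_vector {n : ℕ} {θ : EucB n ≃ₗ[ℝ] EucB n} (hθ : GoodB n θ)
    (ε : EucB n → ZMod 2)
    (hε1 : ∀ α, α ∈ DeltaB n → θ α = α → ε (-α) = ε α)
    (hε2 : ∀ α β : EucB n, α ∈ DeltaB n → θ α = α → β ∈ DeltaB n → θ β = β →
      α + β ∈ DeltaB n → ε (α + β) = ε α + ε β) :
    ∃ x : EucB n, ∀ α ∈ DeltaB n, θ α = α → ∃ k : ℤ, ⟪α, x⟫ = k ∧ (k : ZMod 2) = ε α := by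
  classical
  have hee : ∀ i, ⟪eB n i, eB n i⟫ = (1 : ℝ) := fun i => by rw [inner_eB, eB_self]
  have eΔ : ∀ i, eB n i ∈ DeltaB n := fun i => Or.inr ⟨i, Or.inl rfl⟩
  have eΔ' : ∀ i, -eB n i ∈ DeltaB n := fun i => Or.inr ⟨i, Or.inr rfl⟩
  let y : Fin n → ℤ := fun i =>
    if θ (eB n i) = eB n i then ((ε (eB n i)).val : ℤ)
    else if ∃ j, i < j ∧ (θ (eB n i)) j ≠ 0 then ((ε (eB n i + θ (eB n i))).val : ℤ)
    else 0
  let x : EucB n := WithLp.toLp 2 fun i => (y i : ℝ)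
  have hx : ∀ i, x i = y i := fun i => rfl
  have P1 : ∀ i, θ (eB n i) = eB n i → (y i : ZMod 2) = ε (eB n i) := by
    intro i hi
    simp only [y, if_pos hi]
    exact zmod2_val_cast _
  have pairΔ : ∀ i j, i < j → ∀ σ : ℝ, (σ = 1 ∨ σ = -1) → eB n i + σ • eB n j ∈ DeltaB n := by
    intro i j hij σ hσ
    refine Or.inl ⟨i, j, hij, ?_⟩
    rcases hσ with rfl | rfl
    · left; simp
    · right; left; simp [sub_eq_add_neg]
  have P2 : ∀ i j, i < j → ∀ σ : ℤ, (σ = 1 ∨ σ = -1) →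
      θ (eB n i + (σ : ℝ) • eB n j) = eB n i + (σ : ℝ) • eB n j →
      ((y i + σ * y j : ℤ) : ZMod 2) = ε (eB n i + (σ : ℝ) • eB n j) := by
    intro i j hij σ hσ h
    have hσ' : (σ : ℝ) = 1 ∨ (σ : ℝ) = -1 := by rcases hσ with rfl | rfl <;> simp
    have hσ0 : (σ : ℝ) ≠ 0 := by rcases hσ' with h | h <;> rw [h] <;> norm_num
    have hσ2 : (σ : ZMod 2) = 1 := by rcases hσ with rfl | rfl <;> decide
    have hmem := pairΔ i j hij _ hσ'
    have hij' : eB n j ≠ (σ : ℝ) • eB n i := by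
      intro hh
      have := congrArg (fun v : EucB n => v j) hh
      simp [eB_self, eB_ne n hij.ne'] at this
    rcases fixed_cases hθ hij hσ' h with hi | hi
    · have hj : θ (eB n j) = eB n j := by
        rw [map_add, hi, map_smul] at h
        exact smul_right_injective _ hσ0 (add_left_cancel h)
      push_cast
      rw [P1 i hi, P1 j hj, hσ2, one_mul]
      have hm2 : (σ : ℝ) • eB n j ∈ DeltaB n ∧ ε ((σ : ℝ) • eB n j) = ε (eB n j) := by
        rcases hσ' with h | h <;> rw [h]
        · simpa using eΔ j
        · simpa using ⟨eΔ' j, hε1 _ (eΔ j) hj⟩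
      rw [hε2 _ _ (eΔ i) hi hm2.1 (by rw [map_smul, hj]) hmem, hm2.2]
    · have hj : θ (eB n j) = (σ : ℝ) • eB n i := by
        have h' := h
        rw [map_add, hi, map_smul, add_comm] at h'
        have h'' := add_right_cancel h'
        rw [← h'', smul_smul]
        rcases hσ' with h | h <;> rw [h] <;> simp
      have hnei : θ (eB n i) ≠ eB n i := by
        rw [hi]; intro hh
        have := congrArg (fun v : EucB n => v i) hh
        simp [eB_self, eB_ne n hij.ne] at this
      have yi : y i = ((ε (eB n i + θ (eB n i))).val : ℤ) := by
        simp only [y]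
        rw [if_neg hnei, if_pos ⟨j, hij, by rw [hi]; simpa [eB_self] using hσ0⟩]
      have yj : y j = 0 := by
        simp only [y]
        rw [if_neg (by rw [hj]; exact hij'.symm), if_neg]
        rintro ⟨k, hjk, hk⟩
        rw [hj] at hk
        simp [eB_ne n (hij.trans hjk).ne'] at hk
      rw [yi, yj, mul_zero, add_zero, hi]
      exact zmod2_val_cast _
  have Q2 : ∀ i j, i < j → ∀ σ : ℤ, (σ = 1 ∨ σ = -1) → ∀ α, α = eB n i + (σ : ℝ) • eB n j →
      θ α = α → ∃ k : ℤ, ⟪α, x⟫ = k ∧ (k : ZMod 2) = ε α := by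
    rintro i j hij σ hσ α rfl h
    refine ⟨_, ?_, P2 i j hij σ hσ h⟩
    rw [inner_add_left, real_inner_smul_left, inner_eB_left, inner_eB_left, hx, hx]
    push_cast; rfl
  have Q1 : ∀ i, θ (eB n i) = eB n i →
      ∃ k : ℤ, ⟪eB n i, x⟫ = k ∧ (k : ZMod 2) = ε (eB n i) := fun i hi =>
    ⟨y i, by rw [inner_eB_left, hx], P1 i hi⟩
  have Qneg : ∀ α, α ∈ DeltaB n → (θ α = α → ∃ k : ℤ, ⟪α, x⟫ = k ∧ (k : ZMod 2) = ε α) →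
      ∀ β, β = -α → θ β = β → ∃ k : ℤ, ⟪β, x⟫ = k ∧ (k : ZMod 2) = ε β := by
    rintro α hα hh β rfl hβ
    have hα' : θ α = α := by rw [map_neg] at hβ; exact neg_injective hβ
    obtain ⟨k, hk, hk'⟩ := hh hα'
    refine ⟨-k, by rw [inner_neg_left, hk]; simp, ?_⟩
    rw [hε1 α hα hα', ← hk']
    push_cast
    exact ZMod.neg_eq_self_mod_two _
  have pp := fun i j hij => pairΔ i j hij ((1 : ℤ) : ℝ) (by simp)
  have pm := fun i j hij => pairΔ i j hij ((-1 : ℤ) : ℝ) (by simp)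
  refine ⟨x, ?_⟩
  rintro α (⟨i, j, hij, h | h | h | h⟩ | ⟨i, h | h⟩)
  · exact Q2 i j hij 1 (by simp) α (by rw [h]; simp)
  · exact Q2 i j hij (-1) (by simp) α (by rw [h]; simp [sub_eq_add_neg])
  · exact Qneg _ (pm i j hij) (Q2 i j hij (-1) (by simp) _ rfl) α (by rw [h]; simp; abel)
  · exact Qneg _ (pp i j hij) (Q2 i j hij 1 (by simp) _ rfl) α (by rw [h]; simp; abel)
  · rw [h]; exact Q1 i
  · exact Qneg _ (eΔ i) (Q1 i) α h

/-- The `θ`-fixed part of the coroot lattice, inside the ambient space. -/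
def fixSubB (n : ℕ) (θ : EucB n ≃ₗ[ℝ] EucB n) : Submodule ℤ (EucB n) :=
  (fixedQ n θ).map (QvB n).subtype

theorem mem_fixSubB {n : ℕ} {θ : EucB n ≃ₗ[ℝ] EucB n} {v : EucB n} :
    v ∈ fixSubB n θ ↔ v ∈ QvB n ∧ θ v = v := by
  constructor
  · rintro ⟨u, hu, rfl⟩
    exact ⟨u.2, hu⟩
  · rintro ⟨h1, h2⟩
    exact ⟨⟨v, h1⟩, h2, rfl⟩

/-- The class in `M_θ` of a `θ`-fixed vector of `Q∨`. -/
def clsB (n : ℕ) (θ : EucB n ≃ₗ[ℝ] EucB n) : ↥(fixSubB n θ) →+ MthB n θ where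
  toFun v := Submodule.Quotient.mk
      ⟨piQ n ⟨v, (mem_fixSubB.1 v.2).1⟩,
        Submodule.mem_map_of_mem (p := fixedQ n θ) (by exact (mem_fixSubB.1 v.2).2)⟩
  map_zero' := rfl
  map_add' _ _ := rfl

theorem clsB_two {n : ℕ} {θ : EucB n ≃ₗ[ℝ] EucB n} (v : ↥(fixSubB n θ)) :
    clsB n θ v + clsB n θ v = 0 := by
  rw [← map_add]
  have : (⟨piQ n ⟨((v + v : ↥(fixSubB n θ)) : EucB n), (mem_fixSubB.1 (v + v).2).1⟩,
        Submodule.mem_map_of_mem (p := fixedQ n θ) (by exact (mem_fixSubB.1 (v + v).2).2)⟩ :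
        ↥(AmB n θ)) = 0 := by
    apply Subtype.ext
    refine (Submodule.Quotient.mk_eq_zero (twoQB n)).2 ?_
    refine ⟨⟨v, (mem_fixSubB.1 v.2).1⟩, ?_⟩
    apply Subtype.ext
    simp [two_smul]
  change Submodule.Quotient.mk _ = _
  rw [this]; rfl

theorem clsB_zsmul {n : ℕ} {θ : EucB n ≃ₗ[ℝ] EucB n} (v : ↥(fixSubB n θ)) (k : ℤ)
    (a : ZMod 2) (h : (k : ZMod 2) = a) : a.val • clsB n θ v = clsB n θ (k • v) := by
  rw [map_zsmul, ← natCast_zsmul]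
  have : ((a.val : ℤ) : ZMod 2) = (k : ZMod 2) := by rw [zmod2_val_cast, h]
  have hd : (2 : ℤ) ∣ k - a.val := by
    have := (ZMod.intCast_eq_intCast_iff_dvd_sub _ _ 2).1 this
    exact_mod_cast this
  obtain ⟨c, hc⟩ := hd
  have hk : k = a.val + c * 2 := by omega
  rw [hk, add_smul, mul_smul, two_smul, clsB_two, smul_zero, add_zero]

theorem mB_eq {n : ℕ} {θ : EucB n ≃ₗ[ℝ] EucB n} {β : EucB n} (h : corootB n β ∈ fixSubB n θ) :
    mB n θ β = clsB n θ ⟨corootB n β, h⟩ := by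
  rw [mB, dif_pos (mem_fixSubB.1 h)]; rfl

theorem coroot_mem {n : ℕ} {θ : EucB n ≃ₗ[ℝ] EucB n} {β : EucB n} (h : β ∈ DeltaB n)
    (hf : θ β = β) : corootB n β ∈ fixSubB n θ := by
  refine mem_fixSubB.2 ⟨Submodule.subset_span ⟨β, h, rfl⟩, ?_⟩
  rw [corootB, map_smul, hf]

theorem simple_imag {n : ℕ} {θ : EucB n ≃ₗ[ℝ] EucB n} {β : EucB n} (h : β ∈ SimpleImB n θ) :
    β ∈ DeltaB n ∧ θ β = β := by
  refine ⟨?_, h.1.2⟩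
  rcases h.1.1 with ⟨i, j, hij, h | h⟩ | ⟨i, h⟩
  · exact Or.inl ⟨i, j, hij, Or.inl h⟩
  · exact Or.inl ⟨i, j, hij, Or.inr (Or.inl h)⟩
  · exact Or.inr ⟨i, Or.inl h⟩

theorem sRefl_fixed {n : ℕ} {θ : EucB n ≃ₗ[ℝ] EucB n} {β : EucB n} (h : β ∈ DeltaB n)
    (hf : θ β = β) {α : EucB n} (hα : θ α = α) : θ (sReflB n β α) = sReflB n β α := by
  rw [sReflB_apply h, map_sub, map_smul, hf, hα]

/-- Good and preserving fixed vectors of `θ`. -/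
def GoodTh (n : ℕ) (θ g : EucB n ≃ₗ[ℝ] EucB n) : Prop :=
  GoodB n g ∧ ∀ α, θ α = α → θ (g α) = g α

theorem GoodTh.mul {n : ℕ} {θ g h : EucB n ≃ₗ[ℝ] EucB n} (hg : GoodTh n θ g)
    (hh : GoodTh n θ h) : GoodTh n θ (g * h) :=
  ⟨hg.1.mul hh.1, fun α hα => hg.2 _ (hh.2 _ hα)⟩

theorem wordProdB_cons (n : ℕ) (β : EucB n) (L : List (EucB n)) :
    wordProdB n (β :: L) = wordProdB n L * sReflB n β := by
  simp [wordProdB]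

theorem wordProd_inv_good {n : ℕ} {θ : EucB n ≃ₗ[ℝ] EucB n} (L : List (EucB n))
    (hL : ∀ β ∈ L, β ∈ SimpleImB n θ) : GoodTh n θ (wordProdB n L)⁻¹ := by
  induction L with
  | nil => simpa [wordProdB] using ⟨GoodB.one n, fun _ h => h⟩
  | cons β L ih =>
    obtain ⟨h1, h2⟩ := simple_imag (hL β (by simp))
    rw [wordProdB_cons, mul_inv_rev, sReflB_inv h1]
    exact GoodTh.mul ⟨.refl h1, fun α hα => sRefl_fixed h1 h2 hα⟩
      (ih fun b hb => hL b (by simp [hb]))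

/-- Telescoping formula: `S` is the class of `y - w y`, where `y = acc⁻¹ x`. -/
theorem Sword_eq {n : ℕ} {θ : EucB n ≃ₗ[ℝ] EucB n} {ε : EucB n → ZMod 2} {x : EucB n}
    (hx : ∀ α ∈ DeltaB n, θ α = α → ∃ k : ℤ, ⟪α, x⟫ = k ∧ (k : ZMod 2) = ε α)
    (L : List (EucB n)) (hL : ∀ β ∈ L, β ∈ SimpleImB n θ) :
    ∀ (acc : EucB n ≃ₗ[ℝ] EucB n), GoodTh n θ acc → ∀ y, acc y = x →
    ∃ h : y - wordProdB n L y ∈ fixSubB n θ,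
      SwordB n θ ε acc L = clsB n θ ⟨y - wordProdB n L y, h⟩ := by
  induction L with
  | nil =>
    intro acc _ y _
    have h0 : y - wordProdB n [] y = 0 := by simp [wordProdB]
    refine ⟨by rw [h0]; exact zero_mem _, ?_⟩
    rw [SwordB, ← map_zero (clsB n θ)]
    congr 1
    exact Subtype.ext h0.symm
  | cons β L ih =>
    intro acc hacc y hy
    obtain ⟨h1, h2⟩ := simple_imag (hL β (by simp))
    have hs : GoodTh n θ (sReflB n β) := ⟨.refl h1, fun α hα => sRefl_fixed h1 h2 hα⟩
    have hss : sReflB n β (sReflB n β y) = y := by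
      have := congrArg (fun g : EucB n ≃ₗ[ℝ] EucB n => g y) (sReflB_sq h1)
      exact this
    obtain ⟨h', e'⟩ := ih (fun b hb => hL b (by simp [hb])) (acc * sReflB n β)
      (hacc.mul hs) (sReflB n β y) (by
        change acc (sReflB n β (sReflB n β y)) = x
        rw [hss, hy])
    obtain ⟨k, hk, hk'⟩ := hx (acc β) (hacc.1.mem h1) (hacc.2 _ h2)
    rw [← hy, hacc.1.1] at hk
    have hc := coroot_mem h1 h2
    have hsum : y - wordProdB n (β :: L) y =
        k • corootB n β + (sReflB n β y - wordProdB n L (sReflB n β y)) := by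
      have e1 : wordProdB n (β :: L) y = wordProdB n L (sReflB n β y) := by
        rw [wordProdB_cons]; rfl
      have e2 : sReflB n β y = y - k • corootB n β := by
        rw [sReflB_apply h1, ← Int.cast_smul_eq_zsmul ℝ, ← hk, corootB, real_inner_smul_right,
          smul_smul, real_inner_comm y β, mul_comm]
      rw [e1]
      nth_rewrite 2 [e2]
      abel
    refine ⟨by rw [hsum]; exact add_mem (Submodule.smul_mem _ k hc) h', ?_⟩
    rw [SwordB, e', mB_eq hc, clsB_zsmul _ k _ hk', ← map_add]
    congr 1
    exact Subtype.ext hsum.symm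

theorem Sword_cross {n : ℕ} {θ : EucB n ≃ₗ[ℝ] EucB n} {ε : EucB n → ZMod 2}
    (g : EucB n ≃ₗ[ℝ] EucB n) (L : List (EucB n)) :
    ∀ acc, SwordB n θ (fun α => ε (g α)) acc L = SwordB n θ ε (g * acc) L := by
  induction L with
  | nil => intro _; rfl
  | cons β L ih =>
    intro acc
    rw [SwordB, SwordB, ih, mul_assoc]; rfl

/-- Cross action formula: for a grading `ε` of `Δ_i` and `w, τ ∈ W_i`, with the
cross-acted grading `(τ×ε)(α) = ε(τ⁻¹α)`, one has `m_{τ×ε}(w) = m_ε(wτ) + m_ε(τ)` in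
`M_θ` — stated via arbitrary reduced expressions `Lw`, `Lwτ`, `Lτ` of `w`, `wτ`, `τ` as
words in the simple imaginary roots `Π_i`. -/
theorem mEps_cross_action (n : ℕ) (hn : 0 < n)
    (θ : EucB n ≃ₗ[ℝ] EucB n) (hθW : θ ∈ WeylB n) (hθ2 : θ * θ = 1)
    (ε : EucB n → ZMod 2)
    (hε1 : ∀ α, α ∈ DeltaB n → θ α = α → ε (-α) = ε α)
    (hε2 : ∀ α β : EucB n, α ∈ DeltaB n → θ α = α → β ∈ DeltaB n → θ β = β →
      α + β ∈ DeltaB n → ε (α + β) = ε α + ε β)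
    (w τ : EucB n ≃ₗ[ℝ] EucB n)
    (Lw Lwτ Lτ : List (EucB n))
    (hLw : ∀ β ∈ Lw, β ∈ SimpleImB n θ) (hLwτ : ∀ β ∈ Lwτ, β ∈ SimpleImB n θ)
    (hLτ : ∀ β ∈ Lτ, β ∈ SimpleImB n θ)
    (hLwProd : wordProdB n Lw = w) (hLwτProd : wordProdB n Lwτ = w * τ)
    (hLτProd : wordProdB n Lτ = τ)
    (hLwMin : ∀ K : List (EucB n), (∀ β ∈ K, β ∈ SimpleImB n θ) → wordProdB n K = w →
      Lw.length ≤ K.length)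
    (hLwτMin : ∀ K : List (EucB n), (∀ β ∈ K, β ∈ SimpleImB n θ) →
      wordProdB n K = w * τ → Lwτ.length ≤ K.length)
    (hLτMin : ∀ K : List (EucB n), (∀ β ∈ K, β ∈ SimpleImB n θ) → wordProdB n K = τ →
      Lτ.length ≤ K.length) :
    SwordB n θ (fun α => ε ((τ⁻¹ : EucB n ≃ₗ[ℝ] EucB n) α)) 1 Lw =
      SwordB n θ ε 1 Lwτ + SwordB n θ ε 1 Lτ := by
  have hθ := WeylB_good hθW
  obtain ⟨x, hx⟩ := exists_grading_vector hθ ε hε1 hε2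
  have hτ : GoodTh n θ τ⁻¹ := hLτProd ▸ wordProd_inv_good Lτ hLτ
  have h1 : GoodTh n θ 1 := ⟨GoodB.one n, fun _ h => h⟩
  rw [Sword_cross, mul_one]
  obtain ⟨a, ea⟩ := Sword_eq hx Lw hLw τ⁻¹ hτ (τ x) (by
    change (τ⁻¹ * τ) x = x
    rw [inv_mul_cancel]; rfl)
  obtain ⟨b, eb⟩ := Sword_eq hx Lwτ hLwτ 1 h1 x rfl
  obtain ⟨c, ec⟩ := Sword_eq hx Lτ hLτ 1 h1 x rfl
  rw [ea, eb, ec]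
  have hneg : ∀ v, clsB n θ v = -clsB n θ v := fun v => eq_neg_of_add_eq_zero_left (clsB_two v)
  rw [hneg ⟨x - wordProdB n Lτ x, c⟩, ← map_neg, ← map_add]
  congr 1
  apply Subtype.ext
  change τ x - wordProdB n Lw (τ x) = (x - wordProdB n Lwτ x) + -(x - wordProdB n Lτ x)
  rw [hLwProd, hLwτProd, hLτProd]
  change τ x - w (τ x) = (x - w (τ x)) + -(x - τ x)
  abel
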